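/- Let κ > 0 and let u, v : ℝ × ℝ⁵ → ℂ be smooth functions which, together with all their derivatives, are Schwartz in the space variable locally uniformly in time, and which satisfy the system i∂ₜu + Δₓu + v·conj(u) = 0 and i∂ₜv + κΔₓv + u² = 0 on ℝ × ℝ⁵. Then the energy t ↦ ∫_{ℝ⁵} |∇ₓu(t,x)|² dx + (κ/2)∫_{ℝ⁵} |∇ₓv(t,x)|² dx − Re ∫_{ℝ⁵} conj(v(t,x)) u(t,x)² dx is constant in t. -/

import Mathlib

open MeasureTheory Complex ComplexConjugate

noncomputable section

abbrev E5 := EuclideanSpace ℝ (Fin 5)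

/-- Spatial partial derivative of `f` at `x` in coordinate direction `i`. -/
def pd (f : E5 → ℂ) (x : E5) (i : Fin 5) : ℂ :=
  fderiv ℝ f x (EuclideanSpace.single i 1)

/-- Spatial Laplacian. -/
def lap (f : E5 → ℂ) (x : E5) : ℂ :=
  ∑ i : Fin 5, fderiv ℝ (fun y => pd f y i) x (EuclideanSpace.single i 1)

/-- `u` and all its derivatives are Schwartz in the space variable,
locally uniformly in time. -/
def SchwartzLocUnifT (u : ℝ × E5 → ℂ) : Prop :=
  ∀ (n k : ℕ) (K : Set ℝ), IsCompact K →
    ∃ C : ℝ, ∀ t ∈ K, ∀ x : E5, ‖x‖ ^ k * ‖iteratedFDeriv ℝ n u (t, x)‖ ≤ C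


/-- Smooth and Schwartz in space. -/
def Sm (f : ℝ × E5 → ℂ) : Prop := ContDiff ℝ (⊤ : ℕ∞) f ∧ SchwartzLocUnifT f

/-- Directional derivative in space-time. -/
def Dw (w : ℝ × E5) (f : ℝ × E5 → ℂ) (z : ℝ × E5) : ℂ := fderiv ℝ f z w

/-- Time direction. -/
def tdir : ℝ × E5 := (1, 0)

/-- Space directions. -/
def xdir (i : Fin 5) : ℝ × E5 := (0, EuclideanSpace.single i 1)

lemma natle (n : ℕ) : (n : WithTop ℕ∞) ≤ ((⊤ : ℕ∞) : WithTop ℕ∞) := by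
  exact_mod_cast le_top

lemma Sm.diff {f : ℝ × E5 → ℂ} (hf : Sm f) : Differentiable ℝ f :=
  hf.1.differentiable (by simp)

lemma Sm.add {f g : ℝ × E5 → ℂ} (hf : Sm f) (hg : Sm g) : Sm (fun z => f z + g z) := by
  refine ⟨hf.1.add hg.1, fun n k K hK => ?_⟩
  obtain ⟨C, hC⟩ := hf.2 n k K hK
  obtain ⟨C', hC'⟩ := hg.2 n k K hK
  refine ⟨C + C', fun t ht x => ?_⟩
  have : iteratedFDeriv ℝ n (fun z => f z + g z) (t, x)
      = iteratedFDeriv ℝ n f (t, x) + iteratedFDeriv ℝ n g (t, x) :=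
    iteratedFDeriv_add_apply ((hf.1.of_le (natle n)).contDiffAt)
      ((hg.1.of_le (natle n)).contDiffAt)
  rw [this]
  calc _ ≤ ‖x‖ ^ k * (‖iteratedFDeriv ℝ n f (t, x)‖ + ‖iteratedFDeriv ℝ n g (t, x)‖) := by
        gcongr; exact norm_add_le _ _
    _ ≤ _ := by rw [mul_add]; exact add_le_add (hC t ht x) (hC' t ht x)

lemma Sm.clm {f : ℝ × E5 → ℂ} (hf : Sm f) (L : ℂ →L[ℝ] ℂ) : Sm (fun z => L (f z)) := by
  refine ⟨L.contDiff.comp hf.1, fun n k K hK => ?_⟩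
  obtain ⟨C, hC⟩ := hf.2 n k K hK
  refine ⟨‖L‖ * C, fun t ht x => ?_⟩
  have := L.norm_iteratedFDeriv_comp_left (x := (t, x)) hf.1.contDiffAt (natle n)
  calc _ ≤ ‖x‖ ^ k * (‖L‖ * ‖iteratedFDeriv ℝ n f (t, x)‖) := by gcongr; exact this
    _ = ‖L‖ * (‖x‖ ^ k * ‖iteratedFDeriv ℝ n f (t, x)‖) := by ring
    _ ≤ _ := by gcongr; exact hC t ht x

lemma Sm.conj {f : ℝ × E5 → ℂ} (hf : Sm f) : Sm (fun z => conj (f z)) :=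
  hf.clm (conjCLE : ℂ →L[ℝ] ℂ)

lemma Sm.cmul {f : ℝ × E5 → ℂ} (c : ℂ) (hf : Sm f) : Sm (fun z => c * f z) :=
  hf.clm (ContinuousLinearMap.mul ℝ ℂ c)

lemma Sm.mul {f g : ℝ × E5 → ℂ} (hf : Sm f) (hg : Sm g) : Sm (fun z => f z * g z) := by
  refine ⟨hf.1.mul hg.1, fun n k K hK => ?_⟩
  choose C hC using fun i => hf.2 i k K hK
  choose C' hC' using fun i => hg.2 i 0 K hK
  refine ⟨∑ i ∈ Finset.range (n + 1), (n.choose i : ℝ) * (C i * C' (n - i)), fun t ht x => ?_⟩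
  have := norm_iteratedFDeriv_mul_le hf.1 hg.1 (t, x) (natle n)
  calc _ ≤ ‖x‖ ^ k * ∑ i ∈ Finset.range (n + 1), (n.choose i : ℝ) *
        ‖iteratedFDeriv ℝ i f (t, x)‖ * ‖iteratedFDeriv ℝ (n - i) g (t, x)‖ := by gcongr
    _ = ∑ i ∈ Finset.range (n + 1), (n.choose i : ℝ) *
        ((‖x‖ ^ k * ‖iteratedFDeriv ℝ i f (t, x)‖) *
          (‖x‖ ^ 0 * ‖iteratedFDeriv ℝ (n - i) g (t, x)‖)) := by
        rw [Finset.mul_sum]; refine Finset.sum_congr rfl fun i _ => ?_; ring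
    _ ≤ _ := by
        refine Finset.sum_le_sum fun i _ => ?_
        have h1 := hC i t ht x
        have h2 := hC' (n - i) t ht x
        have h3 : 0 ≤ C i := le_trans (by positivity) h1
        gcongr

lemma Sm.sum {f : Fin 5 → ℝ × E5 → ℂ} (hf : ∀ i, Sm (f i)) : Sm (fun z => ∑ i, f i z) := by
  simp only [Fin.sum_univ_five]
  exact ((((hf 0).add (hf 1)).add (hf 2)).add (hf 3)).add (hf 4)

lemma Sm.dw {f : ℝ × E5 → ℂ} (hf : Sm f) (w : ℝ × E5) : Sm (Dw w f) := by
  have hc : ContDiff ℝ (⊤ : ℕ∞) (fderiv ℝ f) := hf.1.fderiv_right (by simp)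
  refine ⟨hc.clm_apply contDiff_const, fun n k K hK => ?_⟩
  obtain ⟨C, hC⟩ := hf.2 (n + 1) k K hK
  refine ⟨‖w‖ * C, fun t ht x => ?_⟩
  have := norm_iteratedFDeriv_clm_apply_const (c := w) (x := (t, x)) hc.contDiffAt (natle n)
  rw [norm_iteratedFDeriv_fderiv] at this
  calc _ ≤ ‖x‖ ^ k * (‖w‖ * ‖iteratedFDeriv ℝ (n + 1) f (t, x)‖) := by gcongr; exact this
    _ = ‖w‖ * (‖x‖ ^ k * ‖iteratedFDeriv ℝ (n + 1) f (t, x)‖) := by ring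
    _ ≤ _ := by gcongr; exact hC t ht x

lemma dw_add {f g : ℝ × E5 → ℂ} (hf : Sm f) (hg : Sm g) (w z : ℝ × E5) :
    Dw w (fun z => f z + g z) z = Dw w f z + Dw w g z := by
  unfold Dw
  rw [fderiv_fun_add (hf.diff z) (hg.diff z)]; rfl

lemma dw_clm {f : ℝ × E5 → ℂ} (hf : Sm f) (L : ℂ →L[ℝ] ℂ) (w z : ℝ × E5) :
    Dw w (fun z => L (f z)) z = L (Dw w f z) := by
  unfold Dw
  have := (L.hasFDerivAt.comp z (hf.diff z).hasFDerivAt).fderiv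
  exact congrArg (fun A => A w) this

lemma dw_conj {f : ℝ × E5 → ℂ} (hf : Sm f) (w z : ℝ × E5) :
    Dw w (fun z => conj (f z)) z = conj (Dw w f z) :=
  dw_clm hf (conjCLE : ℂ →L[ℝ] ℂ) w z

lemma dw_cmul {f : ℝ × E5 → ℂ} (c : ℂ) (hf : Sm f) (w z : ℝ × E5) :
    Dw w (fun z => c * f z) z = c * Dw w f z :=
  dw_clm hf (ContinuousLinearMap.mul ℝ ℂ c) w z

lemma dw_mul {f g : ℝ × E5 → ℂ} (hf : Sm f) (hg : Sm g) (w z : ℝ × E5) :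
    Dw w (fun z => f z * g z) z = f z * Dw w g z + Dw w f z * g z := by
  unfold Dw
  rw [fderiv_fun_mul (hf.diff z) (hg.diff z)]
  simp [mul_comm]

lemma dw_sum {f : Fin 5 → ℝ × E5 → ℂ} (hf : ∀ i, Sm (f i)) (w z : ℝ × E5) :
    Dw w (fun z => ∑ i, f i z) z = ∑ i, Dw w (f i) z := by
  unfold Dw
  rw [fderiv_fun_sum (fun i _ => (hf i).diff z)]
  simp

lemma dw_comm {f : ℝ × E5 → ℂ} (hf : Sm f) (w w' z : ℝ × E5) :
    Dw w (Dw w' f) z = Dw w' (Dw w f) z := by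
  have hc : ContDiff ℝ (⊤ : ℕ∞) (fderiv ℝ f) := hf.1.fderiv_right (by simp)
  have hd : Differentiable ℝ (fderiv ℝ f) := hc.differentiable (by simp)
  have key : ∀ a b, Dw a (Dw b f) z = fderiv ℝ (fderiv ℝ f) z a b := by
    intro a b
    unfold Dw
    rw [fderiv_clm_apply (hd z) (differentiableAt_const b)]
    simp
  rw [key, key]
  exact (hf.1.contDiffAt.isSymmSndFDerivAt (by simpa using natle 2)) w w'

lemma dw_t {f : ℝ × E5 → ℂ} (hf : Sm f) (t : ℝ) (x : E5) :
    HasDerivAt (fun s => f (s, x)) (Dw tdir f (t, x)) t := by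
  have h : HasDerivAt (fun s : ℝ => (s, x)) tdir t :=
    (hasDerivAt_id t).prodMk (hasDerivAt_const t x)
  exact (hf.diff (t, x)).hasFDerivAt.comp_hasDerivAt t h

lemma hasF_x {f : ℝ × E5 → ℂ} (hf : Sm f) (t : ℝ) (x : E5) :
    HasFDerivAt (fun y => f (t, y)) ((fderiv ℝ f (t, x)).comp (ContinuousLinearMap.inr ℝ ℝ E5)) x :=
  (hf.diff (t, x)).hasFDerivAt.comp x (hasFDerivAt_prodMk_right t x)

lemma dw_x {f : ℝ × E5 → ℂ} (hf : Sm f) (t : ℝ) (x : E5) (i : Fin 5) :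
    fderiv ℝ (fun y => f (t, y)) x (EuclideanSpace.single i 1) = Dw (xdir i) f (t, x) := by
  rw [(hasF_x hf t x).fderiv]
  simp [Dw, xdir]

lemma pd_eq {f : ℝ × E5 → ℂ} (hf : Sm f) (t : ℝ) (x : E5) (i : Fin 5) :
    pd (fun y => f (t, y)) x i = Dw (xdir i) f (t, x) := dw_x hf t x i

lemma lap_eq {f : ℝ × E5 → ℂ} (hf : Sm f) (t : ℝ) (x : E5) :
    lap (fun y => f (t, y)) x = ∑ i, Dw (xdir i) (Dw (xdir i) f) (t, x) := by
  unfold lap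
  refine Finset.sum_congr rfl fun i _ => ?_
  simp only [pd_eq hf]
  exact dw_x (hf.dw _) t x i

lemma Sm.bound {f : ℝ × E5 → ℂ} (hf : Sm f) (K : Set ℝ) (hK : IsCompact K) :
    ∃ C : ℝ, ∀ t ∈ K, ∀ x : E5, ‖f (t, x)‖ ≤ C * (1 + ‖x‖) ^ (-(6 : ℝ)) := by
  obtain ⟨C₁, h1⟩ := hf.2 0 0 K hK
  obtain ⟨C₂, h2⟩ := hf.2 0 6 K hK
  refine ⟨2 ^ 6 * (C₁ + C₂), fun t ht x => ?_⟩
  have a1 := h1 t ht x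
  have a2 := h2 t ht x
  simp only [norm_iteratedFDeriv_zero, pow_zero, one_mul] at a1 a2
  have := pow_mul_le_of_le_of_pow_mul_le (k := 0) (l := 6) (norm_nonneg x)
    (norm_nonneg (f (t, x))) a1 (by simpa using a2)
  simpa using this

lemma int_bound : Integrable (fun x : E5 => (1 + ‖x‖) ^ (-(6 : ℝ))) :=
  integrable_one_add_norm (by simp; norm_num)

lemma Sm.cont {f : ℝ × E5 → ℂ} (hf : Sm f) (t : ℝ) : Continuous (fun x => f (t, x)) :=
  hf.1.continuous.comp (by fun_prop)

lemma Sm.int {f : ℝ × E5 → ℂ} (hf : Sm f) (t : ℝ) : Integrable (fun x => f (t, x)) := by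
  obtain ⟨C, hC⟩ := hf.bound {t} isCompact_singleton
  exact (int_bound.const_mul C).mono' (hf.cont t).aestronglyMeasurable
    (Filter.Eventually.of_forall fun x => hC t rfl x)

lemma Sm.deriv_int {f : ℝ × E5 → ℂ} (hf : Sm f) (t : ℝ) :
    HasDerivAt (fun s => ∫ x, f (s, x)) (∫ x, Dw tdir f (t, x)) t := by
  obtain ⟨C, hC⟩ := (hf.dw tdir).bound (Metric.closedBall t 1) (isCompact_closedBall t 1)
  exact (hasDerivAt_integral_of_dominated_loc_of_deriv_le (F := fun s x => f (s, x))
    (F' := fun s x => Dw tdir f (s, x)) (Metric.closedBall_mem_nhds t one_pos)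
    (Filter.Eventually.of_forall fun s => (hf.cont s).aestronglyMeasurable) (hf.int t)
    ((hf.dw tdir).cont t).aestronglyMeasurable
    (Filter.Eventually.of_forall fun x s hs => hC s hs x) (int_bound.const_mul C)
    (Filter.Eventually.of_forall fun x s _ => dw_t hf s x)).2

lemma Sm.int_dx {f : ℝ × E5 → ℂ} (hf : Sm f) (t : ℝ) (i : Fin 5) :
    ∫ x, Dw (xdir i) f (t, x) = 0 := by
  have := integral_mul_fderiv_eq_neg_fderiv_mul_of_integrable (μ := (volume : Measure E5))
    (f := fun _ : E5 => (1 : ℂ)) (g := fun x => f (t, x)) (v := EuclideanSpace.single i 1)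
    (by simp) (by simpa [dw_x hf] using (hf.dw _).int t) (by simpa using hf.int t)
    (fun x _ => by fun_prop) (fun x _ => (hasF_x hf t x).differentiableAt)
  simpa [dw_x hf] using this

/-- Complex energy density. -/
def edens (κ : ℝ) (u v : ℝ × E5 → ℂ) (z : ℝ × E5) : ℂ :=
  (∑ i, Dw (xdir i) u z * conj (Dw (xdir i) u z))
    + (((κ / 2 : ℝ) : ℂ) * (∑ i, Dw (xdir i) v z * conj (Dw (xdir i) v z))
    + (-1) * (conj (v z) * (u z * u z)))

/-- Energy flux. -/
def flux (κ : ℝ) (u v : ℝ × E5 → ℂ) (i : Fin 5) (z : ℝ × E5) : ℂ :=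
  2 * (Dw tdir u z * conj (Dw (xdir i) u z)) + (κ : ℂ) * (Dw tdir v z * conj (Dw (xdir i) v z))

lemma grad_sm {u : ℝ × E5 → ℂ} (hu : Sm u) (i : Fin 5) :
    Sm (fun z => Dw (xdir i) u z * conj (Dw (xdir i) u z)) := (hu.dw _).mul (hu.dw _).conj

lemma edens_sm (κ : ℝ) {u v : ℝ × E5 → ℂ} (hu : Sm u) (hv : Sm v) : Sm (edens κ u v) :=
  (Sm.sum (grad_sm hu)).add
    (((Sm.sum (grad_sm hv)).cmul _).add ((hv.conj.mul (hu.mul hu)).cmul _))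

lemma flux_sm (κ : ℝ) {u v : ℝ × E5 → ℂ} (hu : Sm u) (hv : Sm v) (i : Fin 5) :
    Sm (flux κ u v i) :=
  (((hu.dw _).mul (hu.dw _).conj).cmul _).add (((hv.dw _).mul (hv.dw _).conj).cmul _)

lemma d_edens (κ : ℝ) {u v : ℝ × E5 → ℂ} (hu : Sm u) (hv : Sm v) (w z : ℝ × E5) :
    Dw w (edens κ u v) z =
      (∑ i, (Dw (xdir i) u z * conj (Dw (xdir i) (Dw w u) z)
        + Dw (xdir i) (Dw w u) z * conj (Dw (xdir i) u z)))
      + (((κ / 2 : ℝ) : ℂ) * (∑ i, (Dw (xdir i) v z * conj (Dw (xdir i) (Dw w v) z)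
        + Dw (xdir i) (Dw w v) z * conj (Dw (xdir i) v z)))
      + (-1) * (conj (v z) * (u z * Dw w u z + Dw w u z * u z) + conj (Dw w v z) * (u z * u z))) := by
  unfold edens
  rw [dw_add (Sm.sum (grad_sm hu))
    (((Sm.sum (grad_sm hv)).cmul _).add ((hv.conj.mul (hu.mul hu)).cmul _)),
    dw_add ((Sm.sum (grad_sm hv)).cmul _) ((hv.conj.mul (hu.mul hu)).cmul _),
    dw_sum (grad_sm hu), dw_cmul _ (Sm.sum (grad_sm hv)), dw_sum (grad_sm hv),
    dw_cmul _ (hv.conj.mul (hu.mul hu)), dw_mul hv.conj (hu.mul hu), dw_mul hu hu, dw_conj hv]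
  have key : ∀ {f : ℝ × E5 → ℂ}, Sm f → ∀ i,
      Dw w (fun z => Dw (xdir i) f z * conj (Dw (xdir i) f z)) z =
      Dw (xdir i) f z * conj (Dw (xdir i) (Dw w f) z)
        + Dw (xdir i) (Dw w f) z * conj (Dw (xdir i) f z) := by
    intro f hf i
    rw [dw_mul (hf.dw _) (hf.dw _).conj, dw_conj (hf.dw _), dw_comm hf w (xdir i)]
  simp only [key hu, key hv]

lemma d_flux (κ : ℝ) {u v : ℝ × E5 → ℂ} (hu : Sm u) (hv : Sm v) (i : Fin 5) (w z : ℝ × E5) :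
    Dw w (flux κ u v i) z =
      2 * (Dw tdir u z * conj (Dw w (Dw (xdir i) u) z)
        + Dw w (Dw tdir u) z * conj (Dw (xdir i) u z))
      + (κ : ℂ) * (Dw tdir v z * conj (Dw w (Dw (xdir i) v) z)
        + Dw w (Dw tdir v) z * conj (Dw (xdir i) v z)) := by
  unfold flux
  rw [dw_add (((hu.dw _).mul (hu.dw _).conj).cmul _) (((hv.dw _).mul (hv.dw _).conj).cmul _),
    dw_cmul _ ((hu.dw _).mul (hu.dw _).conj), dw_cmul _ ((hv.dw _).mul (hv.dw _).conj),
    dw_mul (hu.dw _) (hu.dw _).conj, dw_mul (hv.dw _) (hv.dw _).conj,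
    dw_conj (hu.dw _), dw_conj (hv.dw _)]

/-- The local conservation law, in real parts. -/
lemma conservation_pt (κ : ℝ) {u v : ℝ × E5 → ℂ} (hu : Sm u) (hv : Sm v) (z : ℝ × E5)
    (h1 : I * Dw tdir u z + ∑ i, Dw (xdir i) (Dw (xdir i) u) z + v z * conj (u z) = 0)
    (h2 : I * Dw tdir v z + (κ : ℂ) * ∑ i, Dw (xdir i) (Dw (xdir i) v) z + u z ^ 2 = 0) :
    (Dw tdir (edens κ u v) z).re = (∑ i, Dw (xdir i) (flux κ u v i) z).re := by
  rw [d_edens κ hu hv]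
  simp only [d_flux κ hu hv]
  have r1 := congrArg Complex.re h1
  have i1 := congrArg Complex.im h1
  have r2 := congrArg Complex.re h2
  have i2 := congrArg Complex.im h2
  simp only [pow_two, Fin.sum_univ_five, add_re, add_im, mul_re, mul_im, I_re, I_im, conj_re,
    conj_im, ofReal_re, ofReal_im, zero_re, zero_im, neg_re, neg_im, one_re, one_im,
    re_ofNat, im_ofNat] at r1 i1 r2 i2 ⊢
  linear_combination (-2) * (Dw tdir u z).re * r1 - 2 * (Dw tdir u z).im * i1
    - (Dw tdir v z).re * r2 - (Dw tdir v z).im * i2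

lemma energy_eq (κ : ℝ) {u v : ℝ × E5 → ℂ} (hu : Sm u) (hv : Sm v) (t : ℝ) :
    ((∫ x : E5, ∑ i : Fin 5, ‖pd (fun y => u (t, y)) x i‖ ^ 2)
          + (κ / 2) * (∫ x : E5, ∑ i : Fin 5, ‖pd (fun y => v (t, y)) x i‖ ^ 2)
          - (∫ x : E5, conj (v (t, x)) * (u (t, x)) ^ 2).re)
      = (∫ x, edens κ u v (t, x)).re := by
  have key : ∀ {f : ℝ × E5 → ℂ}, Sm f → 
      (((∫ x : E5, ∑ i : Fin 5, ‖pd (fun y => f (t, y)) x i‖ ^ 2 : ℝ)) : ℂ)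
        = ∫ x, ∑ i, Dw (xdir i) f (t, x) * conj (Dw (xdir i) f (t, x)) := by
    intro f hf
    rw [← integral_complex_ofReal]
    refine integral_congr_ae (Filter.Eventually.of_forall fun x => ?_)
    simp only [pd_eq hf, mul_conj']
    push_cast
    rfl
  unfold edens
  have ha := (Sm.sum (grad_sm hu)).int t
  have hb := ((Sm.sum (grad_sm hv)).cmul ((κ / 2 : ℝ) : ℂ)).int t
  have hc := ((hv.conj.mul (hu.mul hu)).cmul (-1)).int t
  have hbc := (((Sm.sum (grad_sm hv)).cmul ((κ / 2 : ℝ) : ℂ)).add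
    ((hv.conj.mul (hu.mul hu)).cmul (-1))).int t
  rw [integral_add ha hbc, integral_add hb hc, integral_const_mul, integral_const_mul,
    ← key hu, ← key hv, ← ofReal_mul]
  simp only [add_re, ofReal_re, pow_two, neg_mul, one_mul, neg_re]
  ring

theorem energy_conservation (κ : ℝ) (hκ : 0 < κ) (u v : ℝ × E5 → ℂ)
    (hu : ContDiff ℝ (⊤ : ℕ∞) u) (hv : ContDiff ℝ (⊤ : ℕ∞) v)
    (hus : SchwartzLocUnifT u) (hvs : SchwartzLocUnifT v)
    (heq1 : ∀ (t : ℝ) (x : E5),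
      I * deriv (fun s => u (s, x)) t + lap (fun y => u (t, y)) x
        + v (t, x) * conj (u (t, x)) = 0)
    (heq2 : ∀ (t : ℝ) (x : E5),
      I * deriv (fun s => v (s, x)) t + (κ : ℂ) * lap (fun y => v (t, y)) x
        + (u (t, x)) ^ 2 = 0) :
    ∀ t₁ t₂ : ℝ,
      ((∫ x : E5, ∑ i : Fin 5, ‖pd (fun y => u (t₁, y)) x i‖ ^ 2)
          + (κ / 2) * (∫ x : E5, ∑ i : Fin 5, ‖pd (fun y => v (t₁, y)) x i‖ ^ 2)
          - (∫ x : E5, conj (v (t₁, x)) * (u (t₁, x)) ^ 2).re)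
        = ((∫ x : E5, ∑ i : Fin 5, ‖pd (fun y => u (t₂, y)) x i‖ ^ 2)
          + (κ / 2) * (∫ x : E5, ∑ i : Fin 5, ‖pd (fun y => v (t₂, y)) x i‖ ^ 2)
          - (∫ x : E5, conj (v (t₂, x)) * (u (t₂, x)) ^ 2).re) := by
  have hu' : Sm u := ⟨hu, hus⟩
  have hv' : Sm v := ⟨hv, hvs⟩
  intro t₁ t₂
  rw [energy_eq κ hu' hv', energy_eq κ hu' hv']
  have hd : ∀ t, HasDerivAt (fun s => (∫ x, edens κ u v (s, x)).re) 0 t := by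
    intro t
    have h := (edens_sm κ hu' hv').deriv_int t
    have h' := (reCLM.hasFDerivAt (x := ∫ x, edens κ u v (t, x))).comp_hasDerivAt t h
    have hz : reCLM (∫ x, Dw tdir (edens κ u v) (t, x)) = 0 := by
      have hi := ((edens_sm κ hu' hv').dw tdir).int t
      have hj := (Sm.sum (fun i => (flux_sm κ hu' hv' i).dw (xdir i))).int t
      rw [← reCLM.integral_comp_comm hi]
      have : ∫ x, reCLM (Dw tdir (edens κ u v) (t, x))
          = ∫ x, reCLM (∑ i, Dw (xdir i) (flux κ u v i) (t, x)) := by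
        refine integral_congr_ae (Filter.Eventually.of_forall fun x => ?_)
        refine conservation_pt κ hu' hv' (t, x) ?_ ?_
        · rw [← lap_eq hu', ← (dw_t hu' t x).deriv]
          exact heq1 t x
        · rw [← lap_eq hv', ← (dw_t hv' t x).deriv]
          exact heq2 t x
      rw [this, reCLM.integral_comp_comm hj,
        integral_finsetSum _ (fun i _ => ((flux_sm κ hu' hv' i).dw (xdir i)).int t)]
      simp [(flux_sm κ hu' hv' _).int_dx]
    rw [hz] at h'
    exact h'
  exact is_const_of_deriv_eq_zero (fun t => (hd t).differentiableAt)
    (fun t => (hd t).deriv) t₁ t₂
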